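/- Fix a finite alphabet Σ with |Σ| = k ≥ 2. For s ≥ 1 let I_s be the (finite) set of all PCP instances (u_1,v_1),…,(u_n,v_n) with 1 ≤ n ≤ s and all words u_i, v_i of length at most s, and let D_s be the set of instances in I_s such that for no i between 1 and n are u_i and v_i comparable. Then lim_{s→∞} |D_s|/|I_s| = 1. -/

import Mathlib

/-!
An instance with `n` pairs is a list of length `n` over the finite set of pairs of words of length
at most `s`, so if `p` is the number of all such pairs and `q` the number of incomparable ones, the
proportion in question is `(∑ q ^ n) / (∑ p ^ n)` with `n` running from `1` to `s`
(`card_listsOver`). Bernoulli's inequality bounds `q ^ n` below by `(1 - n (1 - q / p)) p ^ n`, so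
the proportion is at least `1 - s (p - q) / p`.

Let `N` be the number of words of length at most `s`; then `p = N ^ 2`. A comparable pair is
determined by its longer word, the length of the other word and which of the two is longer, whence
`p - q ≤ 2 N (s + 1)` (`card_comparable_le`). As `N ≥ 2 ^ s`, the proportion is at least
`1 - 2 s (s + 1) / 2 ^ s`, which tends to `1`.
-/

open Filter Topology Set

/-- Two words are comparable if one is a prefix of the other. -/
def PCPComparable {k : ℕ} (u v : List (Fin k)) : Prop :=
  u <+: v ∨ v <+: u

/-- The set `I_s` of PCP instances `(u_1,v_1),…,(u_n,v_n)` with `1 ≤ n ≤ s` and all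
words of length at most `s`. -/
def PCPInstances (k s : ℕ) : Set (List (List (Fin k) × List (Fin k))) :=
  {L | 1 ≤ L.length ∧ L.length ≤ s ∧ ∀ p ∈ L, p.1.length ≤ s ∧ p.2.length ≤ s}

/-- The set `D_s` of instances in `I_s` in which no `u_i` is comparable with `v_i`. -/
def PCPNoComparable (k s : ℕ) : Set (List (List (Fin k) × List (Fin k))) :=
  {L ∈ PCPInstances k s | ∀ p ∈ L, ¬ PCPComparable p.1 p.2}

/-- The finite set of lists over `A` whose length lies in `S`. -/
def listsOver {α : Type*} (S : Finset ℕ) (A : Finset α) : Finset (List α) :=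
  (S.sigma fun n => Fintype.piFinset fun _ : Fin n => A).map
    (List.equivSigmaTuple (α := α)).symm.toEmbedding

lemma mem_listsOver {α : Type*} {S : Finset ℕ} {A : Finset α} {L : List α} :
    L ∈ listsOver S A ↔ L.length ∈ S ∧ ∀ x ∈ L, x ∈ A := by
  rw [listsOver, Finset.mem_map_equiv]
  simp [List.equivSigmaTuple, List.forall_mem_iff_get]

lemma card_listsOver {α : Type*} (S : Finset ℕ) (A : Finset α) :
    (listsOver S A).card = ∑ n ∈ S, A.card ^ n := by
  simp [listsOver]

/-- The words of length at most `s` over an alphabet of `k` letters. -/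
def shortWords (k s : ℕ) : Finset (List (Fin k)) :=
  listsOver (Finset.range (s + 1)) Finset.univ

lemma mem_shortWords {k s : ℕ} {w : List (Fin k)} : w ∈ shortWords k s ↔ w.length ≤ s := by
  simp [shortWords, mem_listsOver]

lemma two_pow_le_card_shortWords {k : ℕ} (hk : 2 ≤ k) (s : ℕ) :
    2 ^ s ≤ (shortWords k s).card := by
  rw [shortWords, card_listsOver, Finset.card_univ, Fintype.card_fin]
  calc 2 ^ s ≤ k ^ s := Nat.pow_le_pow_left hk s
    _ ≤ ∑ n ∈ Finset.range (s + 1), k ^ n :=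
      Finset.single_le_sum (f := fun n => k ^ n) (fun _ _ => Nat.zero_le _) (by simp)

open Classical in
/-- A comparable pair is recovered from its longer word `w` and a length `i ≤ s`, since the other
word is `w.take i`; the two orders of the pair account for the factor `2`. -/
lemma card_comparable_le (k s : ℕ) :
    ((shortWords k s ×ˢ shortWords k s).filter fun p => PCPComparable p.1 p.2).card
      ≤ 2 * ((shortWords k s).card * (s + 1)) := by
  set T := shortWords k s ×ˢ Finset.range (s + 1) with hT
  have hsub : ((shortWords k s ×ˢ shortWords k s).filter fun p => PCPComparable p.1 p.2) ⊆
      T.image (fun x => (x.1.take x.2, x.1)) ∪ T.image (fun x => (x.1, x.1.take x.2)) := by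
    rintro ⟨u, v⟩ h
    simp only [Finset.mem_filter, Finset.mem_product, mem_shortWords] at h
    obtain ⟨⟨hu, hv⟩, h | h⟩ := h
    · refine Finset.mem_union_left _ (Finset.mem_image.2 ⟨(v, u.length), ?_, ?_⟩)
      · simp [hT, mem_shortWords, hv, hu]
      · simp [← List.prefix_iff_eq_take.1 h]
    · refine Finset.mem_union_right _ (Finset.mem_image.2 ⟨(u, v.length), ?_, ?_⟩)
      · simp [hT, mem_shortWords, hv, hu]
      · simp [← List.prefix_iff_eq_take.1 h]
  have hcard : T.card = (shortWords k s).card * (s + 1) := by simp [hT]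
  calc _ ≤ _ := Finset.card_le_card hsub
    _ ≤ _ := Finset.card_union_le _ _
    _ ≤ T.card + T.card := add_le_add Finset.card_image_le Finset.card_image_le
    _ = _ := by rw [hcard, two_mul]

lemma ncard_PCPInstances (k s : ℕ) :
    (PCPInstances k s).ncard =
      ∑ n ∈ Finset.Icc 1 s, (shortWords k s ×ˢ shortWords k s).card ^ n := by
  rw [← card_listsOver, ← Set.ncard_coe_finset]
  congr 1
  ext L
  simp [PCPInstances, mem_listsOver, mem_shortWords, and_assoc]

open Classical in
lemma ncard_PCPNoComparable (k s : ℕ) :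
    (PCPNoComparable k s).ncard = ∑ n ∈ Finset.Icc 1 s,
      ((shortWords k s ×ˢ shortWords k s).filter fun p => ¬ PCPComparable p.1 p.2).card ^ n := by
  rw [← card_listsOver, ← Set.ncard_coe_finset]
  congr 1
  ext L
  simp only [PCPNoComparable, PCPInstances, Set.mem_ofPred_eq, Finset.mem_coe, mem_listsOver,
    Finset.mem_Icc, Finset.mem_filter, Finset.mem_product, mem_shortWords]
  grind

/-- Bernoulli's inequality, summed over the exponents `1, …, s`. -/
lemma bernoulli_sum {p q : ℝ} (hp : 0 < p) (hq : 0 ≤ q) (hqp : q ≤ p) (s : ℕ) :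
    (1 - s * ((p - q) / p)) * ∑ n ∈ Finset.Icc 1 s, p ^ n ≤ ∑ n ∈ Finset.Icc 1 s, q ^ n := by
  rw [Finset.mul_sum]
  refine Finset.sum_le_sum fun n hn => ?_
  have hns : (n : ℝ) ≤ s := by exact_mod_cast (Finset.mem_Icc.1 hn).2
  have hx0 : 0 ≤ (p - q) / p := div_nonneg (by linarith) hp.le
  have hx1 : (p - q) / p ≤ 1 := (div_le_one hp).2 (by linarith)
  have hb := one_add_mul_le_pow (a := -((p - q) / p)) (by linarith) n
  have hqn : q = (1 + -((p - q) / p)) * p := by field_simp; ring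
  calc (1 - s * ((p - q) / p)) * p ^ n ≤ (1 + -((p - q) / p)) ^ n * p ^ n := by
        gcongr
        nlinarith
    _ = q ^ n := by rw [← mul_pow, ← hqn]

lemma proportion_lower_bound {k : ℕ} (hk : 2 ≤ k) {s : ℕ} (hs : 1 ≤ s) :
    1 - 2 * ((s : ℝ) ^ 2 / 2 ^ s + (s : ℝ) ^ 1 / 2 ^ s)
      ≤ ((PCPNoComparable k s).ncard : ℝ) / ((PCPInstances k s).ncard) := by
  classical
  have hsplit := Finset.card_filter_add_card_filter_not (s := shortWords k s ×ˢ shortWords k s)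
    (fun p => PCPComparable p.1 p.2)
  have hcomp := card_comparable_le k s
  rw [ncard_PCPInstances, ncard_PCPNoComparable]
  have hN := two_pow_le_card_shortWords hk s
  rw [Finset.card_product] at hsplit ⊢
  set N := (shortWords k s).card
  set b := ((shortWords k s ×ˢ shortWords k s).filter fun p => PCPComparable p.1 p.2).card
  set q := ((shortWords k s ×ˢ shortWords k s).filter fun p => ¬ PCPComparable p.1 p.2).card
  have hN' : (2 : ℝ) ^ s ≤ N := by exact_mod_cast hN
  have hN0 : (0 : ℝ) < N := lt_of_lt_of_le (by positivity) hN'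
  have hsplit' : (b : ℝ) + q = N * N := by exact_mod_cast hsplit
  have hcomp' : (b : ℝ) ≤ 2 * (N * (s + 1)) := by exact_mod_cast hcomp
  have hb0 : (0 : ℝ) ≤ b := Nat.cast_nonneg b
  have hp : (0 : ℝ) < N * N := by positivity
  have hsum : 0 < ∑ n ∈ Finset.Icc 1 s, ((N : ℝ) * N) ^ n :=
    Finset.sum_pos (fun n _ => by positivity) ⟨1, by simp [hs]⟩
  push_cast
  rw [le_div_iff₀ hsum]
  refine le_trans ?_ (bernoulli_sum hp (Nat.cast_nonneg q) (by linarith) s)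
  refine mul_le_mul_of_nonneg_right ?_ hsum.le
  have hfrac : ((N : ℝ) * N - q) / (N * N) ≤ 2 * (s + 1) / 2 ^ s := by
    calc ((N : ℝ) * N - q) / (N * N) ≤ 2 * (N * (s + 1)) / (N * N) := by
          gcongr
          linarith
      _ = 2 * (s + 1) / N := by field_simp
      _ ≤ 2 * (s + 1) / 2 ^ s := by gcongr
  have hmul := mul_le_mul_of_nonneg_left hfrac (Nat.cast_nonneg (α := ℝ) s)
  have heq : (s : ℝ) * (2 * (s + 1) / 2 ^ s)
      = 2 * ((s : ℝ) ^ 2 / 2 ^ s + (s : ℝ) ^ 1 / 2 ^ s) := by ring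
  linarith

/-- For a fixed alphabet of size `k ≥ 2`, the proportion of PCP instances in `I_s`
with no comparable pair tends to `1` as `s → ∞`. -/
theorem pcp_generic_no_comparable (k : ℕ) (hk : 2 ≤ k) :
    Tendsto (fun s => ((PCPNoComparable k s).ncard : ℝ) / ((PCPInstances k s).ncard))
      atTop (𝓝 1) := by
  have h1 : Tendsto (fun s : ℕ => 1 - 2 * ((s : ℝ) ^ 2 / 2 ^ s + (s : ℝ) ^ 1 / 2 ^ s))
      atTop (𝓝 1) := by
    have h := ((tendsto_pow_const_div_const_pow_of_one_lt 2 (one_lt_two (α := ℝ))).add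
      (tendsto_pow_const_div_const_pow_of_one_lt 1 (one_lt_two (α := ℝ)))).const_mul 2
    simpa using h.const_sub 1
  refine tendsto_of_tendsto_of_tendsto_of_le_of_le' h1 tendsto_const_nhds ?_ ?_
  · filter_upwards [eventually_ge_atTop 1] with s hs using proportion_lower_bound hk hs
  · refine Eventually.of_forall fun s => div_le_one_of_le₀ ?_ (Nat.cast_nonneg _)
    classical
    rw [ncard_PCPInstances, ncard_PCPNoComparable]
    gcongr
    exact Finset.filter_subset _ _
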